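/- Let W₁, W₂ be random variables such that W₁ is exponentially distributed with rate ξ₁ > 0, W₂ is exponentially distributed with rate ξ₂ > 0, and W₁, W₂ and the pair of processes (H₁, H₂) are mutually independent. Then for all t₁, t₂ ≥ 0: P(H₁(W₁) > t₁, H₂(W₂) > t₂) = E[exp(−ξ₁ L₁(t₁) − ξ₂ L₂(t₂))]. -/

import Mathlib

open MeasureTheory ProbabilityTheory

/-!
Almost surely `H i (W i) > t i` holds if and only if `W i > L i (t i)`, where `L i` is the inverse
process of `H i`: for a monotone path the two events can only differ when `W i = L i (t i)`, and
this has probability zero because `W i` has an atomless law and is independent of `L i (t i)`.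
Conditioning on the processes, the probability that `W i > L i (t i)` for all `i` is the expected
product of the survival functions of the `W i` at the points `L i (t i)`. The inverse is an infimum
over an uncountable set, but along monotone paths rational times suffice, so it is a.s. equal to a
measurable functional of the path.
-/

open Set

section PassageTime

/-- The generalized right-continuous inverse `inf {x ≥ 0 : h x > t}` of a path `h` on `[0, ∞)`.
Like every infimum of an empty set of reals, it is `0` if the path never exceeds the level `t`. -/
noncomputable def passageTime (h : ℝ → ℝ) (t : ℝ) : ℝ :=
  sInf {x | 0 ≤ x ∧ t < h x}

variable {h : ℝ → ℝ} {t w : ℝ}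

lemma passageTime_nonneg : 0 ≤ passageTime h t :=
  Real.sInf_nonneg fun _ hx ↦ hx.1

lemma passageTime_le (hw : 0 ≤ w) (hlt : t < h w) : passageTime h t ≤ w :=
  csInf_le ⟨0, fun _ hx ↦ hx.1⟩ ⟨hw, hlt⟩

lemma lt_of_passageTime_lt (hmono : MonotoneOn h (Ici 0)) (hex : ∃ x, 0 ≤ x ∧ t < h x)
    (hw : passageTime h t < w) : t < h w := by
  obtain ⟨x, ⟨hx, htx⟩, hxw⟩ := exists_lt_of_csInf_lt hex hw
  exact htx.trans_le (hmono hx (hx.trans hxw.le) hxw.le)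

lemma lt_apply_iff_passageTime_lt (hmono : MonotoneOn h (Ici 0)) (hex : ∃ x, 0 ≤ x ∧ t < h x)
    (hw : 0 ≤ w) (hne : w ≠ passageTime h t) : t < h w ↔ passageTime h t < w :=
  ⟨fun hlt ↦ (passageTime_le hw hlt).lt_of_ne' hne, lt_of_passageTime_lt hmono hex⟩

open Classical in
lemma iInf_nnrat_eq_ofReal_passageTime (hmono : MonotoneOn h (Ici 0))
    (hex : ∃ x, 0 ≤ x ∧ t < h x) :
    ⨅ q : ℚ≥0, (if t < h q then ENNReal.ofReal q else ⊤) =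
      ENNReal.ofReal (passageTime h t) := by
  apply le_antisymm
  · refine le_of_forall_gt fun c hc ↦ ?_
    obtain ⟨r, -, hLr, hrc⟩ := ENNReal.lt_iff_exists_real_btwn.1 hc
    obtain ⟨q, hLq, hqr⟩ := exists_rat_btwn ((ENNReal.ofReal_lt_ofReal_iff_of_nonneg
      passageTime_nonneg).1 hLr)
    lift q to ℚ≥0 using mod_cast passageTime_nonneg.trans hLq.le
    calc ⨅ q : ℚ≥0, (if t < h q then ENNReal.ofReal q else ⊤)
        ≤ if t < h q then ENNReal.ofReal q else ⊤ := iInf_le _ q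
      _ = ENNReal.ofReal q := if_pos (lt_of_passageTime_lt hmono hex (mod_cast hLq))
      _ ≤ ENNReal.ofReal r := ENNReal.ofReal_le_ofReal (mod_cast hqr.le)
      _ < c := hrc
  · refine le_iInf fun q ↦ ?_
    split_ifs with hq
    · exact ENNReal.ofReal_le_ofReal (passageTime_le q.cast_nonneg hq)
    · exact le_top

lemma exists_measurable_eq_passageTime (t : ℝ) :
    ∃ φ : (ℝ → ℝ) → ℝ, Measurable φ ∧
      ∀ h, MonotoneOn h (Ici 0) → (∃ x, 0 ≤ x ∧ t < h x) → φ h = passageTime h t := by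
  classical
  refine ⟨fun h ↦ (⨅ q : ℚ≥0, if t < h q then ENNReal.ofReal q else ⊤).toReal,
    (Measurable.iInf fun q ↦ ?_).ennreal_toReal, fun h hmono hex ↦ ?_⟩
  · exact .ite (measurableSet_lt measurable_const (measurable_pi_apply _))
      measurable_const measurable_const
  · simp only [iInf_nnrat_eq_ofReal_passageTime hmono hex,
      ENNReal.toReal_ofReal passageTime_nonneg]

end PassageTime

section Independence

variable {Ω : Type*} {mΩ : MeasurableSpace Ω} {P : Measure Ω}

lemma measure_prodMk_mem_eq_lintegral_of_indepFun [IsFiniteMeasure P] {E F : Type*}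
    [MeasurableSpace E] [MeasurableSpace F] {X : Ω → E} {Y : Ω → F} (hX : AEMeasurable X P)
    (hY : AEMeasurable Y P) (hXY : IndepFun X Y P) {S : Set (E × F)} (hS : MeasurableSet S) :
    P {ω | (X ω, Y ω) ∈ S} = ∫⁻ ω, P.map X {x | (x, Y ω) ∈ S} ∂P := by
  calc P {ω | (X ω, Y ω) ∈ S}
      = P.map (fun ω ↦ (X ω, Y ω)) S :=
        (Measure.map_apply_of_aemeasurable (hX.prodMk hY) hS).symm
    _ = ∫⁻ y, P.map X ((·, y) ⁻¹' S) ∂P.map Y := by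
        rw [hXY.map_prod_eq_prod_map_map hX hY, Measure.prod_apply_symm hS]
    _ = ∫⁻ ω, P.map X {x | (x, Y ω) ∈ S} ∂P :=
        lintegral_map' (measurable_measure_prodMk_right hS).aemeasurable hY

lemma ae_ne_of_indepFun [IsFiniteMeasure P] {E : Type*} [MeasurableSpace E] [MeasurableEq E]
    {X Y : Ω → E} [NullSingletonClass (P.map X)] (hX : AEMeasurable X P) (hY : AEMeasurable Y P)
    (hXY : IndepFun X Y P) : ∀ᵐ ω ∂P, X ω ≠ Y ω := by
  have hdiag := measure_prodMk_mem_eq_lintegral_of_indepFun hX hY hXY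
    (measurableSet_diagonal (α := E))
  simpa only [ae_iff, not_not, mem_diagonal_iff, ne_eq, ofPred_eq_eq_singleton, measure_singleton,
    lintegral_zero] using hdiag

lemma measure_forall_lt_eq_lintegral_prod [IsProbabilityMeasure P] {ι E : Type*} [Fintype ι]
    [LinearOrder E] [TopologicalSpace E] [OrderClosedTopology E] [SecondCountableTopology E]
    [MeasurableSpace E] [OpensMeasurableSpace E] {W L : ι → Ω → E}
    (hW : ∀ i, AEMeasurable (W i) P) (hL : ∀ i, AEMeasurable (L i) P)
    (hWindep : iIndepFun W P) (hWL : IndepFun (fun ω i ↦ W i ω) (fun ω i ↦ L i ω) P) :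
    P {ω | ∀ i, L i ω < W i ω} = ∫⁻ ω, ∏ i, P.map (W i) (Ioi (L i ω)) ∂P := by
  have hS : MeasurableSet {p : (ι → E) × (ι → E) | ∀ i, p.2 i < p.1 i} := by
    simp only [ofPred_forall]
    exact .iInter fun i ↦ measurableSet_lt (by fun_prop) (by fun_prop)
  have hbox (ω : Ω) : {w : ι → E | ∀ i, L i ω < w i} = univ.pi fun i ↦ Ioi (L i ω) := by
    ext w
    simp
  have (i : ι) : IsProbabilityMeasure (P.map (W i)) := Measure.isProbabilityMeasure_map (hW i)
  calc P {ω | ∀ i, L i ω < W i ω}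
      = ∫⁻ ω, P.map (fun ω i ↦ W i ω) {w | ∀ i, L i ω < w i} ∂P :=
        measure_prodMk_mem_eq_lintegral_of_indepFun (aemeasurable_pi_lambda _ hW)
          (aemeasurable_pi_lambda _ hL) hWL hS
    _ = ∫⁻ ω, ∏ i, P.map (W i) (Ioi (L i ω)) ∂P := by
        simp only [(iIndepFun_iff_map_fun_eq_pi_map hW).1 hWindep, hbox, Measure.pi_pi]

lemma indep_sup_of_iIndep_three {m₁ m₂ m₃ : MeasurableSpace Ω} (h₁ : m₁ ≤ mΩ) (h₂ : m₂ ≤ mΩ)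
    (h₃ : m₃ ≤ mΩ) (hindep : iIndep ![m₁, m₂, m₃] P) : Indep (m₁ ⊔ m₂) m₃ P := by
  have hle : ∀ i, ![m₁, m₂, m₃] i ≤ mΩ := by
    simp [Fin.forall_fin_succ, h₁, h₂, h₃]
  have hdisj : Disjoint ({0, 1} : Set (Fin 3)) {2} := by simp
  simpa [iSup_insert] using indep_iSup_of_disjoint hle hindep hdisj

lemma iIndepFun_pair_of_iIndep_three {E : Type*} [mE : MeasurableSpace E] {X Y : Ω → E}
    {m : MeasurableSpace Ω} (hindep : iIndep ![mE.comap X, mE.comap Y, m] P) :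
    iIndepFun ![X, Y] P := by
  have hcomap : (fun i ↦ mE.comap (![X, Y] i)) = ![mE.comap X, mE.comap Y, m] ∘ Fin.castSucc := by
    ext1 i
    fin_cases i <;> rfl
  exact (iIndepFun_iff_iIndep _ _ _).2 (hcomap ▸ hindep.precomp (Fin.castSucc_injective 2))

lemma indepFun_pair_processes_of_iIndep_three {E F T : Type*} [mE : MeasurableSpace E]
    [mF : MeasurableSpace F] {X Y : Ω → E} {G₁ G₂ : T → Ω → F} (hX : Measurable X)
    (hY : Measurable Y) (hG₁ : ∀ x, Measurable (G₁ x)) (hG₂ : ∀ x, Measurable (G₂ x))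
    (hindep : iIndep ![mE.comap X, mE.comap Y,
      ⨆ x, MeasurableSpace.comap (fun ω ↦ (G₁ x ω, G₂ x ω)) inferInstance] P) :
    IndepFun (fun ω i ↦ ![X, Y] i ω) (fun ω i x ↦ ![G₁, G₂] i x ω) P := by
  have hpair (x : T) : mF.comap (G₁ x) ⊔ mF.comap (G₂ x) ≤
      ⨆ x, MeasurableSpace.comap (fun ω ↦ (G₁ x ω, G₂ x ω)) inferInstance :=
    le_iSup_of_le x (MeasurableSpace.comap_prodMk _ _).ge
  refine indep_of_indep_of_le (indep_sup_of_iIndep_three hX.comap_le hY.comap_le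
    (iSup_le fun x ↦ ((hG₁ x).prodMk (hG₂ x)).comap_le) hindep) ?_ ?_
  · simp only [MeasurableSpace.pi, MeasurableSpace.comap_iSup, MeasurableSpace.comap_comp,
      iSup_le_iff, Fin.forall_fin_two]
    exact ⟨le_sup_left, le_sup_right⟩
  · simp only [MeasurableSpace.pi, MeasurableSpace.comap_iSup, MeasurableSpace.comap_comp,
      iSup_le_iff, Fin.forall_fin_two]
    exact ⟨fun x ↦ le_sup_left.trans (hpair x), fun x ↦ le_sup_right.trans (hpair x)⟩

end Independence

section Subordination

variable {Ω ι : Type*} {mΩ : MeasurableSpace Ω} {P : Measure Ω}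
  {H : ι → ℝ → Ω → ℝ} {W : ι → Ω → ℝ} {t : ι → ℝ}

lemma aemeasurable_passageTime {G : ℝ → Ω → ℝ} {s : ℝ} (hG : ∀ x, Measurable (G x))
    (hmono : ∀ᵐ ω ∂P, MonotoneOn (G · ω) (Ici 0))
    (hex : ∀ᵐ ω ∂P, ∃ x, 0 ≤ x ∧ s < G x ω) :
    AEMeasurable (fun ω ↦ passageTime (G · ω) s) P := by
  obtain ⟨φ, hφ, hφ_eq⟩ := exists_measurable_eq_passageTime s
  refine ⟨fun ω ↦ φ (G · ω), hφ.comp (measurable_pi_lambda _ hG), ?_⟩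
  filter_upwards [hmono, hex] with ω hmono hex
  exact (hφ_eq _ hmono hex).symm

lemma indepFun_passageTime [Countable ι] {E : Type*} [MeasurableSpace E] {X : Ω → E}
    (hmono : ∀ i, ∀ᵐ ω ∂P, MonotoneOn (H i · ω) (Ici 0))
    (hex : ∀ i, ∀ᵐ ω ∂P, ∃ x, 0 ≤ x ∧ t i < H i x ω)
    (hXH : IndepFun X (fun ω i x ↦ H i x ω) P) :
    IndepFun X (fun ω i ↦ passageTime (H i · ω) (t i)) P := by
  choose φ hφ hφ_eq using fun i ↦ exists_measurable_eq_passageTime (t i)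
  have hφ_pi : Measurable fun (h : ι → ℝ → ℝ) i ↦ φ i (h i) :=
    measurable_pi_lambda _ fun i ↦ (hφ i).comp (measurable_pi_apply i)
  refine (hXH.comp measurable_id hφ_pi).congr .rfl ?_
  filter_upwards [ae_all_iff.2 hmono, ae_all_iff.2 hex] with ω hmono hex
  exact funext fun i ↦ hφ_eq i _ (hmono i) (hex i)

lemma measure_forall_lt_subordinated_eq_lintegral_prod [IsProbabilityMeasure P] [Fintype ι]
    [∀ i, NullSingletonClass (P.map (W i))] (hH : ∀ i x, Measurable (H i x))
    (hmono : ∀ i, ∀ᵐ ω ∂P, MonotoneOn (H i · ω) (Ici 0))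
    (hex : ∀ i, ∀ᵐ ω ∂P, ∃ x, 0 ≤ x ∧ t i < H i x ω)
    (hW : ∀ i, AEMeasurable (W i) P) (hW_nonneg : ∀ i, ∀ᵐ ω ∂P, 0 ≤ W i ω)
    (hWindep : iIndepFun W P)
    (hWH : IndepFun (fun ω i ↦ W i ω) (fun ω i x ↦ H i x ω) P) :
    P {ω | ∀ i, t i < H i (W i ω) ω} =
      ∫⁻ ω, ∏ i, P.map (W i) (Ioi (passageTime (H i · ω) (t i))) ∂P := by
  have hL (i : ι) : AEMeasurable (fun ω ↦ passageTime (H i · ω) (t i)) P :=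
    aemeasurable_passageTime (hH i) (hmono i) (hex i)
  have hWL := indepFun_passageTime hmono hex hWH
  have hne (i : ι) : ∀ᵐ ω ∂P, W i ω ≠ passageTime (H i · ω) (t i) :=
    ae_ne_of_indepFun (hW i) (hL i) (hWL.comp (measurable_pi_apply i) (measurable_pi_apply i))
  rw [← measure_forall_lt_eq_lintegral_prod hW hL hWindep hWL]
  apply measure_congr
  filter_upwards [ae_all_iff.2 hmono, ae_all_iff.2 hex, ae_all_iff.2 hW_nonneg,
    ae_all_iff.2 hne] with ω hmono hex hW_nonneg hne
  exact propext <| forall_congr' fun i ↦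
    lt_apply_iff_passageTime_lt (hmono i) (hex i) (hW_nonneg i) (hne i)

end Subordination

section Exponential

variable {r : ℝ}

instance nullSingletonClass_expMeasure : NullSingletonClass (expMeasure r) :=
  nullSingletonClass_withDensity _

lemma expMeasure_Ioi (hr : 0 < r) {s : ℝ} (hs : 0 ≤ s) :
    expMeasure r (Ioi s) = ENNReal.ofReal (Real.exp (-(r * s))) := by
  have := isProbabilityMeasure_expMeasure hr
  have hIoi : (expMeasure r).real (Ioi s) = Real.exp (-(r * s)) := by
    rw [← compl_Iic, probReal_compl_eq_one_sub measurableSet_Iic, ← cdf_eq_real,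
      cdf_expMeasure_eq hr, if_pos hs, sub_sub_cancel]
  rw [← hIoi, ofReal_measureReal]

lemma ae_nonneg_expMeasure (hr : 0 < r) : ∀ᵐ x ∂expMeasure r, 0 ≤ x := by
  have := isProbabilityMeasure_expMeasure hr
  have hone : expMeasure r (Ioi 0) = 1 := by simpa using expMeasure_Ioi hr le_rfl
  filter_upwards [(mem_ae_iff_prob_eq_one measurableSet_Ioi).2 hone] with x hx using le_of_lt hx

lemma hasLaw_expMeasure_of_survival {Ω : Type*} {mΩ : MeasurableSpace Ω} {P : Measure Ω}
    [IsProbabilityMeasure P] {W : Ω → ℝ} (hW : AEMeasurable W P) (hr : 0 < r)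
    (hsurv : ∀ s, 0 ≤ s → P.real {ω | s < W ω} = Real.exp (-(r * s))) :
    HasLaw W (expMeasure r) P := by
  have := isProbabilityMeasure_expMeasure hr
  have := Measure.isProbabilityMeasure_map hW
  have hcdf {s : ℝ} (hs : 0 ≤ s) : cdf (P.map W) s = 1 - Real.exp (-(r * s)) := by
    rw [← hsurv s hs, cdf_eq_real, ← compl_Ioi, probReal_compl_eq_one_sub measurableSet_Ioi,
      map_measureReal_apply_of_aemeasurable hW measurableSet_Ioi]
    rfl
  refine ⟨hW, Measure.eq_of_cdf _ _ (StieltjesFunction.ext fun x ↦ ?_)⟩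
  rw [cdf_expMeasure_eq hr]
  split_ifs with hx
  · exact hcdf hx
  · have hle : cdf (P.map W) x ≤ cdf (P.map W) 0 := monotone_cdf _ (not_le.1 hx).le
    have hzero : cdf (P.map W) 0 = 0 := by simpa using hcdf le_rfl
    exact (hle.trans_eq hzero).antisymm (cdf_nonneg _ _)

end Exponential

theorem subordinated_exponential_times_joint_survival_general
    {Ω ι : Type*} [MeasurableSpace Ω] {P : Measure Ω} [IsProbabilityMeasure P] [Fintype ι]
    {H : ι → ℝ → Ω → ℝ} {W : ι → Ω → ℝ} {ξ t : ι → ℝ} (hH : ∀ i x, Measurable (H i x))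
    (hmono : ∀ i, ∀ᵐ ω ∂P, MonotoneOn (H i · ω) (Ici 0))
    (hex : ∀ i, ∀ᵐ ω ∂P, ∃ x, 0 ≤ x ∧ t i < H i x ω)
    (hξ : ∀ i, 0 < ξ i) (hW : ∀ i, HasLaw (W i) (expMeasure (ξ i)) P)
    (hWindep : iIndepFun W P)
    (hWH : IndepFun (fun ω i ↦ W i ω) (fun ω i x ↦ H i x ω) P) :
    P.real {ω | ∀ i, t i < H i (W i ω) ω} =
      ∫ ω, Real.exp (-∑ i, ξ i * passageTime (H i · ω) (t i)) ∂P := by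
  have (i : ι) : NullSingletonClass (P.map (W i)) := (hW i).map_eq ▸ inferInstance
  have hW_nonneg (i : ι) : ∀ᵐ ω ∂P, 0 ≤ W i ω :=
    ae_of_ae_map (hW i).aemeasurable ((hW i).map_eq ▸ ae_nonneg_expMeasure (hξ i))
  have hL (i : ι) : AEMeasurable (fun ω ↦ passageTime (H i · ω) (t i)) P :=
    aemeasurable_passageTime (hH i) (hmono i) (hex i)
  have hprod (ω : Ω) : ∏ i, P.map (W i) (Ioi (passageTime (H i · ω) (t i))) =
      ENNReal.ofReal (Real.exp (-∑ i, ξ i * passageTime (H i · ω) (t i))) := by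
    simp only [(hW _).map_eq, expMeasure_Ioi (hξ _) passageTime_nonneg, ← Finset.sum_neg_distrib,
      Real.exp_sum, ENNReal.ofReal_prod_of_nonneg fun _ _ ↦ (Real.exp_pos _).le]
  rw [integral_eq_lintegral_of_nonneg_ae (.of_forall fun _ ↦ (Real.exp_pos _).le)
    (AEMeasurable.aestronglyMeasurable (by fun_prop)), measureReal_def,
    measure_forall_lt_subordinated_eq_lintegral_prod hH hmono hex (fun i ↦ (hW i).aemeasurable)
      hW_nonneg hWindep hWH]
  simp only [hprod]

/-- If `W₁, W₂` are exponential with rates `ξ₁, ξ₂` and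
`W₁`, `W₂` and the pair of processes `(H₁,H₂)` are mutually independent, then
`P(H₁(W₁) > t₁, H₂(W₂) > t₂) = E[exp(−ξ₁L₁(t₁) − ξ₂L₂(t₂))]`. -/
theorem subordinated_exponential_times_joint_survival
    {Ω : Type*} [MeasurableSpace Ω] (P : Measure Ω) [IsProbabilityMeasure P]
    (H1 H2 : ℝ → Ω → ℝ)
    (hH1meas : Measurable (Function.uncurry H1))
    (hH2meas : Measurable (Function.uncurry H2))
    (hpath : ∀ᵐ ω ∂P,
      (∀ x y : ℝ, 0 ≤ x → x ≤ y → H1 x ω ≤ H1 y ω) ∧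
      (∀ M : ℝ, ∃ x : ℝ, 0 ≤ x ∧ H1 x ω > M) ∧
      (∀ x y : ℝ, 0 ≤ x → x ≤ y → H2 x ω ≤ H2 y ω) ∧
      (∀ M : ℝ, ∃ x : ℝ, 0 ≤ x ∧ H2 x ω > M))
    (L1 L2 : ℝ → Ω → ℝ)
    (hL1 : ∀ t ω, L1 t ω = sInf {x : ℝ | 0 ≤ x ∧ H1 x ω > t})
    (hL2 : ∀ t ω, L2 t ω = sInf {x : ℝ | 0 ≤ x ∧ H2 x ω > t})
    (W1 W2 : Ω → ℝ) (hW1meas : Measurable W1) (hW2meas : Measurable W2)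
    (ξ1 ξ2 : ℝ) (hξ1 : 0 < ξ1) (hξ2 : 0 < ξ2)
    (hW1exp : ∀ s : ℝ, 0 ≤ s → (P {ω | W1 ω > s}).toReal = Real.exp (-(ξ1 * s)))
    (hW2exp : ∀ s : ℝ, 0 ≤ s → (P {ω | W2 ω > s}).toReal = Real.exp (-(ξ2 * s)))
    (hindep : iIndep
      ![MeasurableSpace.comap W1 inferInstance,
        MeasurableSpace.comap W2 inferInstance,
        ⨆ x : ℝ, MeasurableSpace.comap (fun ω => (H1 x ω, H2 x ω)) inferInstance]
      P)
    (t1 t2 : ℝ) (ht1 : 0 ≤ t1) (ht2 : 0 ≤ t2) :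
    (P {ω | H1 (W1 ω) ω > t1 ∧ H2 (W2 ω) ω > t2}).toReal
      = ∫ ω, Real.exp (-(ξ1 * L1 t1 ω) - ξ2 * L2 t2 ω) ∂P := by
  have hH1 (x : ℝ) : Measurable (H1 x) := hH1meas.comp measurable_prodMk_left
  have hH2 (x : ℝ) : Measurable (H2 x) := hH2meas.comp measurable_prodMk_left
  have hmono : ∀ i, ∀ᵐ ω ∂P, MonotoneOn (![H1, H2] i · ω) (Ici 0) := Fin.forall_fin_two.2
    ⟨hpath.mono fun _ hω x hx y _ hxy ↦ hω.1 x y hx hxy,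
      hpath.mono fun _ hω x hx y _ hxy ↦ hω.2.2.1 x y hx hxy⟩
  have hex : ∀ i, ∀ᵐ ω ∂P, ∃ x, 0 ≤ x ∧ ![t1, t2] i < ![H1, H2] i x ω := Fin.forall_fin_two.2
    ⟨hpath.mono fun _ hω ↦ hω.2.1 t1, hpath.mono fun _ hω ↦ hω.2.2.2 t2⟩
  have hW : ∀ i, HasLaw (![W1, W2] i) (expMeasure (![ξ1, ξ2] i)) P := Fin.forall_fin_two.2
    ⟨hasLaw_expMeasure_of_survival hW1meas.aemeasurable hξ1 hW1exp,
      hasLaw_expMeasure_of_survival hW2meas.aemeasurable hξ2 hW2exp⟩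
  have hsurvival := subordinated_exponential_times_joint_survival_general
    (Fin.forall_fin_two.2 ⟨hH1, hH2⟩) hmono hex (Fin.forall_fin_two.2 ⟨hξ1, hξ2⟩) hW
    (iIndepFun_pair_of_iIndep_three hindep)
    (indepFun_pair_processes_of_iIndep_three hW1meas hW2meas hH1 hH2 hindep)
  simpa only [Fin.forall_fin_two, Fin.sum_univ_two, neg_add', Matrix.cons_val_zero,
    Matrix.cons_val_one, measureReal_def, passageTime, hL1, hL2] using hsurvival
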